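/- Let R be an associative ring, G an infinite group with G ≠ G' (G is not equal to its derived subgroup), and A an RG-module. If A/C_A(G) is an infinite R-module but A/C_A(H) is a finite R-module for every proper subgroup H of G, then G has no proper subgroups of finite index and G/G' is isomorphic to a quasi-cyclic q-group C_{q^∞} for some prime q. -/

import Mathlib

/-- `C_A(H)`: the `R`-submodule of `A` consisting of the elements fixed by every
element of the subgroup `H` of `G`. -/
def moduleCentralizer (R : Type*) [Ring R] {G : Type*} [Group G] (A : Type*)
    [AddCommGroup A] [Module R A] [DistribMulAction G A] [SMulCommClass G R A]
    (H : Subgroup G) : Submodule R A where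
  carrier := {a | ∀ g ∈ H, g • a = a}
  add_mem' := fun {a b} ha hb g hg => by rw [smul_add, ha g hg, hb g hg]
  zero_mem' := fun g _ => smul_zero g
  smul_mem' := fun r a ha g hg => by rw [smul_comm, ha g hg]

/-- The quasi-cyclic (Prüfer) `q`-group `C_{q^∞}`: the `q`-primary component of `ℚ/ℤ`. -/
def PruferGroup (q : ℕ) (hq : q.Prime) :
    AddSubgroup (ℚ ⧸ AddSubgroup.zmultiples (1 : ℚ)) :=
  haveI : Fact q.Prime := ⟨hq⟩
  AddCommGroup.primaryComponent (ℚ ⧸ AddSubgroup.zmultiples (1 : ℚ)) q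

/-!
The argument runs through groups whose top subgroup is sup-irreducible, i.e. which are not the join
of two proper subgroups. Since `C_A(H ⊔ K) = C_A(H) ⊓ C_A(K)`, the hypotheses force this on `G`.
A proper subgroup of finite index together with finitely many cyclic subgroups would generate `G`,
making `G` infinite cyclic; but `ℤ = 2ℤ + 3ℤ`.

Hence `B = G/G'` is infinite, and its top subgroup is again sup-irreducible, so it has no proper
subgroup of finite index either. It is therefore divisible: a character that kills `n • B` takes
values in the finite `n`-torsion of `ℚ/ℤ`, so its kernel has finite index. Every nonzero
homomorphism from a divisible group to `B` is surjective, because its image is a direct summand.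
For `b ∈ B` of prime order `q`, sending `1/q` to `b` extends to an embedding `C_{q^∞} → B`, so
`B ≅ C_{q^∞}`. Such an element exists: if `b` had infinite order, then `B/⟨6b⟩` would be
quasi-cyclic but contain elements of order `2` and `3`.
-/

section SupIrreducible

theorem supIrred_orderIso_apply {α β : Type*} [SemilatticeSup α] [SemilatticeSup β] (e : α ≃o β)
    {a : α} (ha : SupIrred a) : SupIrred (e a) := by
  refine ⟨fun hmin ↦ ha.1 (e.isMin_apply.mp hmin), fun b c hbc ↦ ?_⟩
  have hsup : e.symm b ⊔ e.symm c = a := by rw [← map_sup, hbc, e.symm_apply_apply]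
  simpa only [e.symm_apply_eq] using ha.2 hsup

@[to_additive]
theorem supIrred_subgroup_top_of_surjective {G H : Type*} [Group G] [Group H] [Nontrivial H]
    (f : G →* H) (hf : Function.Surjective f) (hG : SupIrred (⊤ : Subgroup G)) :
    SupIrred (⊤ : Subgroup H) := by
  refine ⟨not_isMin_top, fun K L hKL ↦ ?_⟩
  have hsup : K.comap f ⊔ L.comap f = ⊤ := by
    rw [Subgroup.comap_sup_eq f K L hf, hKL, Subgroup.comap_top]
  simpa only [← Subgroup.comap_top f, (Subgroup.comap_injective hf).eq_iff] using hG.2 hsup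

variable {G : Type*} [Group G]

@[to_additive]
theorem not_supIrred_subgroup_top_of_isCyclic [Infinite G] [IsCyclic G] :
    ¬ SupIrred (⊤ : Subgroup G) := by
  intro hG
  obtain ⟨g, hg⟩ := IsCyclic.exists_zpow_surjective (G := G)
  have hord : orderOf g = 0 := Infinite.orderOf_eq_zero_of_forall_mem_zpowers hg
  have hne (k : ℕ) (hk : k ≠ 1) : Subgroup.zpowers (g ^ k) ≠ ⊤ := fun h ↦ by
    have hmem : g ∈ Subgroup.zpowers (g ^ k) := h ▸ Subgroup.mem_top g
    rw [mem_zpowers_pow_iff, hord, Nat.gcd_zero_right] at hmem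
    exact hk hmem
  have hg_mem : g ∈ Subgroup.zpowers (g ^ 2) ⊔ Subgroup.zpowers (g ^ 3) := by
    have hprod : (g ^ 2)⁻¹ * g ^ 3 = g := by rw [pow_succ g 2, inv_mul_cancel_left]
    have hmul := Subgroup.mul_mem_sup (inv_mem (Subgroup.mem_zpowers (g ^ 2)))
      (Subgroup.mem_zpowers (g ^ 3))
    rwa [hprod] at hmul
  have hsup : Subgroup.zpowers (g ^ 2) ⊔ Subgroup.zpowers (g ^ 3) = ⊤ :=
    (Subgroup.eq_top_iff' _).mpr fun x ↦ Subgroup.zpowers_le.mpr hg_mem (hg x)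
  exact (hG.2 hsup).elim (hne 2 (by decide)) (hne 3 (by decide))

@[to_additive]
theorem isCyclic_of_supIrred_subgroup_top (hG : SupIrred (⊤ : Subgroup G))
    (H : Subgroup G) [H.FiniteIndex] (hH : H ≠ ⊤) : IsCyclic G := by
  have : Fintype (G ⧸ H) := H.fintypeQuotientOfFiniteIndex
  let cosetSpan : Subgroup G := Finset.univ.sup fun c : G ⧸ H ↦ Subgroup.zpowers c.out
  have hsup : H ⊔ cosetSpan = ⊤ := by
    refine (Subgroup.eq_top_iff' _).mpr fun x ↦ ?_
    obtain ⟨h, hx⟩ := QuotientGroup.mk_out_eq_mul H x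
    have hout : (x : G ⧸ H).out ∈ cosetSpan :=
      Finset.le_sup (f := fun c : G ⧸ H ↦ Subgroup.zpowers c.out) (Finset.mem_univ _)
        (Subgroup.mem_zpowers _)
    rw [← mul_inv_eq_iff_eq_mul.mpr hx]
    exact mul_mem (Subgroup.mem_sup_right hout) (Subgroup.mem_sup_left (inv_mem h.2))
  obtain ⟨c, -, hc⟩ := hG.finset_sup_eq ((hG.2 hsup).resolve_left hH)
  exact ⟨c.out, (Subgroup.eq_top_iff' _).mp hc⟩

@[to_additive]
theorem subgroup_eq_top_of_finiteIndex [Infinite G] (hG : SupIrred (⊤ : Subgroup G))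
    (H : Subgroup G) [H.FiniteIndex] : H = ⊤ := by
  by_contra hH
  have := isCyclic_of_supIrred_subgroup_top hG H hH
  exact not_supIrred_subgroup_top_of_isCyclic hG

end SupIrreducible

section Divisible

variable {A B : Type*} [AddCommGroup A] [AddCommGroup B]

theorem exists_nsmul_addOrderOf_eq {x : A} (hx : addOrderOf x ≠ 0) {n : ℕ}
    (hn : n ∣ addOrderOf x) : ∃ k : ℕ, addOrderOf (k • x) = n :=
  ⟨_, orderOf_pow_orderOf_div (G := Multiplicative A) hx hn⟩

theorem injective_of_forall_addOrderOf_eq_prime {p : ℕ} (hp : p.Prime)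
    (hA : ∀ x : A, ∃ n : ℕ, addOrderOf x = p ^ n) (f : A →+ B)
    (hf : ∀ x, addOrderOf x = p → f x ≠ 0) : Function.Injective f := by
  refine (injective_iff_map_eq_zero f).mpr fun x hx ↦ by_contra fun hx0 ↦ ?_
  obtain ⟨n, hn⟩ := hA x
  have hn0 : n ≠ 0 := by
    rintro rfl
    exact hx0 (AddMonoid.addOrderOf_eq_one_iff.mp (hn.trans (pow_zero p)))
  obtain ⟨k, hk⟩ := exists_nsmul_addOrderOf_eq (hn ▸ pow_ne_zero n hp.ne_zero)
    (hn ▸ dvd_pow_self p hn0)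
  exact hf (k • x) hk (by rw [map_nsmul, hx, nsmul_zero])

theorem addOrderOf_mk_zmultiples_nsmul {b : B} (hb : addOrderOf b = 0) (n : ℕ) :
    addOrderOf (b : B ⧸ AddSubgroup.zmultiples (n • b)) = n := by
  refine Nat.dvd_right_iff_eq.mp fun k ↦ ?_
  rw [addOrderOf_dvd_iff_nsmul_eq_zero, ← QuotientAddGroup.mk_nsmul, QuotientAddGroup.eq_zero_iff,
    AddSubgroup.mem_zmultiples_iff, ← Int.natCast_dvd_natCast]
  have hinj := injective_zsmul_iff_not_isOfFinAddOrder.mpr (addOrderOf_eq_zero_iff.mp hb)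
  refine exists_congr fun z ↦ ?_
  rw [← natCast_zsmul b n, ← natCast_zsmul b k, smul_smul, hinj.eq_iff, mul_comm, eq_comm]

theorem surjective_nsmul_of_forall_finiteIndex_eq_top
    (hB : ∀ H : AddSubgroup B, H.FiniteIndex → H = ⊤) {n : ℕ} (hn : n ≠ 0) :
    Function.Surjective fun x : B ↦ n • x := by
  by_contra hsurj
  obtain ⟨x, hx⟩ := not_forall.mp hsurj
  let nB : AddSubgroup B := (nsmulAddMonoidHom n).range
  have hmk : (x : B ⧸ nB) ≠ 0 := fun h ↦ hx ((QuotientAddGroup.eq_zero_iff x).mp h)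
  obtain ⟨χ, hχ⟩ := CharacterModule.exists_character_apply_ne_zero_of_ne_zero hmk
  let ψ : B →+ AddCircle (1 : ℚ) := AddMonoidHom.comp χ (QuotientAddGroup.mk' nB)
  have hψ (z : B) : n • ψ z = 0 := by
    have hz : ((n • z : B) : B ⧸ nB) = 0 := (QuotientAddGroup.eq_zero_iff _).mpr ⟨z, rfl⟩
    calc n • ψ z = χ (n • z : B) := (map_nsmul ψ n z).symm
      _ = 0 := by rw [hz, map_zero]
  have hfin : Finite ψ.range := (AddCircle.finite_torsion (1 : ℚ) (Nat.pos_of_ne_zero hn)).subset <|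
    Set.range_subset_iff.mpr hψ
  have hker : ψ.ker = ⊤ := hB _ (AddSubgroup.finiteIndex_ker ψ)
  exact hχ (hker ▸ AddSubgroup.mem_top x : x ∈ ψ.ker)

theorem exists_addMonoidHom_apply_eq [DivisibleBy B ℤ] (a : A) (b : B)
    (hab : addOrderOf b ∣ addOrderOf a) : ∃ f : A →+ B, f a = b := by
  have hb : addOrderOf a • b = 0 := addOrderOf_dvd_iff_nsmul_eq_zero.mp hab
  let i : ZMod (addOrderOf a) →+ A :=
    ZMod.lift _ ⟨zmultiplesHom A a, by simp [addOrderOf_nsmul_eq_zero]⟩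
  let g : ZMod (addOrderOf a) →+ B := ZMod.lift _ ⟨zmultiplesHom B b, by simp [hb]⟩
  have hi : Function.Injective i := (ZMod.lift_injective _).mpr fun m hm ↦ by
    rwa [ZMod.intCast_zmod_eq_zero_iff_dvd, addOrderOf_dvd_iff_zsmul_eq_zero]
  obtain ⟨f, hf⟩ := (Module.Baer.of_divisible B).extension_property_addMonoidHom i hi g
  have h1 : f (i ((1 : ℤ) : ZMod _)) = g ((1 : ℤ) : ZMod _) := DFunLike.congr_fun hf _
  exact ⟨f, by simpa only [i, g, ZMod.lift_coe, zmultiplesHom_apply, one_zsmul] using h1⟩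

theorem exists_isCompl_of_divisibleBy (D : AddSubgroup B) [DivisibleBy D ℤ] :
    ∃ K : AddSubgroup B, IsCompl D K := by
  obtain ⟨r, hr⟩ := (Module.Baer.of_divisible D).extension_property_addMonoidHom
    D.subtype D.subtype_injective (AddMonoidHom.id D)
  have hr_apply (d : D) : r d = d := DFunLike.congr_fun hr d
  refine ⟨r.ker, AddSubgroup.disjoint_def.mpr fun {x} hxD hxK ↦ ?_,
    codisjoint_iff.mpr <| (AddSubgroup.eq_top_iff' _).mpr fun x ↦ ?_⟩
  · rw [← Subtype.coe_mk x hxD, ← hr_apply ⟨x, hxD⟩, r.mem_ker.mp hxK, AddSubgroup.coe_zero]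
  · rw [← add_sub_cancel (r x : B) x]
    refine AddSubgroup.add_mem_sup (r x).2 (r.mem_ker.mpr ?_)
    rw [map_sub, hr_apply, sub_self]

theorem surjective_of_supIrred_addSubgroup_top [DivisibleBy A ℤ]
    (hB : SupIrred (⊤ : AddSubgroup B)) {f : A →+ B} (hf : f ≠ 0) : Function.Surjective f := by
  have : DivisibleBy f.range ℤ :=
    f.rangeRestrict_surjective.divisibleBy _ fun a n ↦ map_zsmul f.rangeRestrict n a
  obtain ⟨K, hK⟩ := exists_isCompl_of_divisibleBy f.range
  refine AddMonoidHom.range_eq_top.mp ((hB.2 hK.sup_eq_top).resolve_right fun hKtop ↦ hf ?_)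
  rw [← AddMonoidHom.range_eq_bot_iff]
  exact hK.disjoint.eq_bot_of_le (hKtop ▸ le_top)

theorem exists_mem_primaryComponent_nsmul_eq [DivisibleBy A ℤ] {p : ℕ} [Fact p.Prime] {n : ℕ}
    (hn : n ≠ 0) {y : A} (hy : y ∈ AddCommGroup.primaryComponent A p) :
    ∃ x ∈ AddCommGroup.primaryComponent A p, n • x = y := by
  obtain ⟨k, m, hm, rfl⟩ := Nat.exists_eq_pow_mul_and_not_dvd hn p (Fact.out : p.Prime).ne_one
  obtain ⟨l, hl⟩ := AddCommGroup.mem_primaryComponent.mp hy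
  have hpk : ((p ^ k : ℕ) : ℤ) ≠ 0 :=
    Nat.cast_ne_zero.mpr (pow_ne_zero k (Fact.out : p.Prime).ne_zero)
  obtain ⟨z, hz⟩ := DivisibleBy.surjective_smul A ℤ hpk y
  simp only [natCast_zsmul] at hz
  have hz_primary : p ^ (k + l) • z = 0 := by rw [pow_add, mul_nsmul, hz, hl]
  have hcoprime : m.Coprime (addOrderOf z) :=
    (((Nat.Prime.coprime_iff_not_dvd Fact.out).mpr hm).symm.pow_right (k + l)).coprime_dvd_right
      (addOrderOf_dvd_iff_nsmul_eq_zero.mpr hz_primary)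
  obtain ⟨a, ha⟩ := exists_nsmul_eq_self_of_coprime hcoprime
  refine ⟨a • z, nsmul_mem (AddCommGroup.mem_primaryComponent.mpr ⟨k + l, hz_primary⟩) a, ?_⟩
  rw [mul_nsmul', smul_comm m a z, ha, hz]

end Divisible

section Quasicyclic

noncomputable instance PruferGroup.divisibleBy (q : ℕ) (hq : q.Prime) :
    DivisibleBy (PruferGroup q hq) ℤ :=
  haveI : Fact q.Prime := ⟨hq⟩
  haveI : DivisibleBy (PruferGroup q hq) ℕ := divisibleByOfSMulRightSurj _ _ fun hn y ↦
    let ⟨x, hx, hxy⟩ := exists_mem_primaryComponent_nsmul_eq hn y.2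
    ⟨⟨x, hx⟩, Subtype.ext hxy⟩
  AddGroup.divisibleByIntOfDivisibleByNat _

theorem PruferGroup.exists_addOrderOf_eq (q : ℕ) (hq : q.Prime) :
    ∃ u : PruferGroup q hq, addOrderOf u = q ∧ ∀ x, q • x = 0 → ∃ m : ℕ, m • u = x := by
  have hcoe (m : ℕ) : ((m / q * 1 : ℚ) : AddCircle (1 : ℚ)) =
      m • ((1 / q : ℚ) : AddCircle (1 : ℚ)) := by
    rw [← AddCircle.coe_nsmul, nsmul_eq_mul, mul_one, mul_one_div]
  have hord := AddCircle.addOrderOf_period_div (p := (1 : ℚ)) hq.pos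
  have hmem : ((1 / q : ℚ) : AddCircle (1 : ℚ)) ∈ PruferGroup q hq :=
    ⟨1, by rw [pow_one, ← addOrderOf_dvd_iff_nsmul_eq_zero, hord]⟩
  refine ⟨⟨_, hmem⟩, by rw [AddSubgroup.addOrderOf_mk, hord], fun x hx ↦ ?_⟩
  obtain ⟨m, -, hm⟩ := (AddCircle.nsmul_eq_zero_iff hq.pos).mp (congrArg Subtype.val hx)
  exact ⟨m, Subtype.ext ((hcoe m).symm.trans hm)⟩

theorem PruferGroup.exists_addOrderOf_eq_prime_pow {q : ℕ} {hq : q.Prime} (x : PruferGroup q hq) :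
    ∃ n : ℕ, addOrderOf x = q ^ n := by
  have : Fact q.Prime := ⟨hq⟩
  obtain ⟨n, hn⟩ := x.2
  exact exists_addOrderOf_eq_prime_pow_iff.mpr ⟨n, Subtype.ext hn⟩

variable {B : Type*} [AddCommGroup B]

theorem PruferGroup.nonempty_addEquiv_of_addOrderOf_eq [DivisibleBy B ℤ]
    (hB : SupIrred (⊤ : AddSubgroup B)) {q : ℕ} (hq : q.Prime) {b : B} (hb : addOrderOf b = q) :
    Nonempty (B ≃+ PruferGroup q hq) := by
  obtain ⟨u, hu, hgen⟩ := PruferGroup.exists_addOrderOf_eq q hq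
  obtain ⟨f, hfu⟩ := exists_addMonoidHom_apply_eq u b (hb.trans hu.symm).dvd
  have hf0 : f ≠ 0 := by
    rintro rfl
    rw [← hfu, AddMonoidHom.zero_apply, addOrderOf_zero] at hb
    exact hq.one_lt.ne hb
  have hinj : Function.Injective f := by
    refine injective_of_forall_addOrderOf_eq_prime hq
      PruferGroup.exists_addOrderOf_eq_prime_pow f fun x hx hfx ↦ ?_
    obtain ⟨m, rfl⟩ := hgen x (addOrderOf_dvd_iff_nsmul_eq_zero.mp hx.dvd)
    rw [map_nsmul, hfu, ← addOrderOf_dvd_iff_nsmul_eq_zero, hb, ← hu,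
      addOrderOf_dvd_iff_nsmul_eq_zero] at hfx
    rw [hfx, addOrderOf_zero] at hx
    exact hq.one_lt.ne hx
  exact ⟨(AddEquiv.ofBijective f ⟨hinj, surjective_of_supIrred_addSubgroup_top hB hf0⟩).symm⟩

theorem exists_prime_addOrderOf_eq [DivisibleBy B ℤ] (hB : SupIrred (⊤ : AddSubgroup B)) :
    ∃ (q : ℕ) (b : B), q.Prime ∧ addOrderOf b = q := by
  have : Nontrivial B := AddSubgroup.nontrivial_iff.mp (nontrivial_of_ne _ _ hB.ne_bot)
  obtain ⟨b, hb⟩ := exists_ne (0 : B)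
  rcases eq_or_ne (addOrderOf b) 0 with hb_inf | hb_fin
  · let Q := B ⧸ AddSubgroup.zmultiples (6 • b)
    have hord : addOrderOf (b : Q) = 6 := addOrderOf_mk_zmultiples_nsmul hb_inf 6
    have hord0 : addOrderOf (b : Q) ≠ 0 := by rw [hord]; decide
    have : Nontrivial Q := ⟨b, 0, fun h ↦ by simp [h] at hord⟩
    have : DivisibleBy Q ℤ := QuotientAddGroup.mk_surjective.divisibleBy _ fun _ _ ↦ rfl
    have hQ : SupIrred (⊤ : AddSubgroup Q) := supIrred_addSubgroup_top_of_surjective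
      (QuotientAddGroup.mk' _) (QuotientAddGroup.mk'_surjective _) hB
    obtain ⟨k, hk⟩ := exists_nsmul_addOrderOf_eq hord0 (n := 2) (by rw [hord]; decide)
    obtain ⟨l, hl⟩ := exists_nsmul_addOrderOf_eq hord0 (n := 3) (by rw [hord]; decide)
    obtain ⟨e⟩ := PruferGroup.nonempty_addEquiv_of_addOrderOf_eq hQ Nat.prime_two hk
    obtain ⟨n, hn⟩ := PruferGroup.exists_addOrderOf_eq_prime_pow (e (l • b))
    rw [e.addOrderOf_eq, hl] at hn
    exact absurd (Nat.prime_three.dvd_of_dvd_pow hn.dvd) (by decide)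
  · obtain ⟨q, hq, hqb⟩ := Nat.exists_prime_and_dvd (mt AddMonoid.addOrderOf_eq_one_iff.mp hb)
    obtain ⟨k, hk⟩ := exists_nsmul_addOrderOf_eq hb_fin hqb
    exact ⟨q, k • b, hq, hk⟩

theorem exists_nonempty_addEquiv_pruferGroup [Infinite B] (hB : SupIrred (⊤ : AddSubgroup B)) :
    ∃ (q : ℕ) (hq : q.Prime), Nonempty (B ≃+ PruferGroup q hq) := by
  have : DivisibleBy B ℕ := divisibleByOfSMulRightSurj _ _ fun hn ↦
    surjective_nsmul_of_forall_finiteIndex_eq_top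
      (fun H _ ↦ addSubgroup_eq_top_of_finiteIndex hB H) hn
  have : DivisibleBy B ℤ := AddGroup.divisibleByIntOfDivisibleByNat B
  obtain ⟨q, b, hq, hb⟩ := exists_prime_addOrderOf_eq hB
  exact ⟨q, hq, PruferGroup.nonempty_addEquiv_of_addOrderOf_eq hB hq hb⟩

end Quasicyclic

section ModuleCentralizer

theorem finite_quotient_inf {R M : Type*} [Ring R] [AddCommGroup M] [Module R M]
    (N K : Submodule R M) [Finite (M ⧸ N)] [Finite (M ⧸ K)] : Finite (M ⧸ N ⊓ K) :=
  have hker : (N.mkQ.prod K.mkQ).ker = N ⊓ K := by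
    rw [LinearMap.ker_prod, Submodule.ker_mkQ, Submodule.ker_mkQ]
  Finite.of_injective ((N ⊓ K).liftQ (N.mkQ.prod K.mkQ) hker.ge)
    (LinearMap.ker_eq_bot.mp (Submodule.ker_liftQ_eq_bot _ _ _ hker.le))

variable (R : Type*) [Ring R] {G : Type*} [Group G] (A : Type*) [AddCommGroup A] [Module R A]
  [DistribMulAction G A] [SMulCommClass G R A]

theorem moduleCentralizer_bot : moduleCentralizer R A (⊥ : Subgroup G) = ⊤ :=
  (Submodule.eq_top_iff').mpr fun a g hg ↦ by rw [Subgroup.mem_bot.mp hg, one_smul]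

theorem moduleCentralizer_sup (H K : Subgroup G) :
    moduleCentralizer R A (H ⊔ K) = moduleCentralizer R A H ⊓ moduleCentralizer R A K := by
  ext a
  exact sup_le_iff (a := H) (b := K) (c := MulAction.stabilizer G a)

theorem supIrred_top_of_finite_quotient_moduleCentralizer
    (hG : Infinite (A ⧸ moduleCentralizer R A (⊤ : Subgroup G)))
    (hH : ∀ H : Subgroup G, H ≠ ⊤ → Finite (A ⧸ moduleCentralizer R A H)) :
    SupIrred (⊤ : Subgroup G) := by
  rw [← not_finite_iff_infinite] at hG
  refine ⟨fun hmin ↦ hG ?_, fun H K hHK ↦ ?_⟩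
  · rw [isMin_iff_eq_bot.mp hmin, moduleCentralizer_bot]
    infer_instance
  · by_contra! hproper
    have := hH H hproper.1
    have := hH K hproper.2
    rw [← hHK, moduleCentralizer_sup] at hG
    exact hG (finite_quotient_inf _ _)

end ModuleCentralizer

/-- Lemma 2.2 (finiteness version): if `G` is infinite, `G ≠ G'`, `A/C_A(G)` is an infinite
`R`-module but `A/C_A(H)` is a finite `R`-module for every proper subgroup `H`, then `G` has
no proper subgroups of finite index and `G/G'` is a quasi-cyclic `q`-group for some prime `q`. -/
theorem finite_proper_subgroups (R : Type*) [Ring R] (G : Type*) [Group G] [Infinite G]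
    (A : Type*) [AddCommGroup A] [Module R A] [DistribMulAction G A] [SMulCommClass G R A]
    (hG' : commutator G ≠ ⊤)
    (hG : Infinite (A ⧸ moduleCentralizer R A (⊤ : Subgroup G)))
    (hH : ∀ H : Subgroup G, H ≠ ⊤ → Finite (A ⧸ moduleCentralizer R A H)) :
    (∀ H : Subgroup G, H.FiniteIndex → H = ⊤) ∧
    ∃ (q : ℕ) (hq : q.Prime),
      Nonempty (Abelianization G ≃* Multiplicative (PruferGroup q hq)) := by
  have hGirr : SupIrred (⊤ : Subgroup G) :=
    supIrred_top_of_finite_quotient_moduleCentralizer R A hG hH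
  have hfin (H : Subgroup G) (_ : H.FiniteIndex) : H = ⊤ := subgroup_eq_top_of_finiteIndex hGirr H
  refine ⟨hfin, ?_⟩
  have : Infinite (Abelianization G) := not_finite_iff_infinite.mp fun h ↦
    hG' (hfin (commutator G) (Subgroup.finiteIndex_iff_finite_quotient.mpr h))
  have hab : SupIrred (⊤ : Subgroup (Abelianization G)) :=
    supIrred_subgroup_top_of_surjective Abelianization.of QuotientGroup.mk_surjective hGirr
  have hadd : SupIrred (⊤ : AddSubgroup (Additive (Abelianization G))) :=
    supIrred_orderIso_apply (Subgroup.toAddSubgroup (G := Abelianization G)) hab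
  obtain ⟨q, hq, ⟨e⟩⟩ := exists_nonempty_addEquiv_pruferGroup hadd
  exact ⟨q, hq, ⟨e.toMultiplicativeRight⟩⟩
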